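/- Let $\sigma_1, \sigma_2 : \mathbb{R}^d \to (0,\infty]$ be lower semicontinuous functions satisfying $\inf_x \min(\sigma_1(x), \sigma_2(x)) > h > 0$ and $\|\sigma_1 - \sigma_2\|_{L^\infty} \le M < \infty$. Then there exists a constant $C = C(d, h, M)$ such that for every $f$ in the screened Sobolev space $\widetilde H^{1/2}_{\sigma_2}(\mathbb{R}^d)$ one has $\|f\|_{\widetilde H^{1/2}_{\sigma_1}} \le C \|f\|_{\widetilde H^{1/2}_{\sigma_2}}$; in particular the two screened spaces coincide. -/

import Mathlib

open MeasureTheory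
open scoped ENNReal

noncomputable section

/-- Squared screened fractional Sobolev seminorm
`‖f‖²_{H̃^{1/2}_Θ} = ∫_{ℝ^d} ∫_{B(0,Θ(x))} |f(x+k)-f(x)|²/|k|^{d+1} dk dx`,
for a screening function `Θ : ℝ^d → (0,∞]`. -/
def screenedSq (d : ℕ) (Θ : EuclideanSpace ℝ (Fin d) → ℝ≥0∞)
    (f : EuclideanSpace ℝ (Fin d) → ℝ) : ℝ≥0∞ :=
  ∫⁻ x, ∫⁻ k in {k : EuclideanSpace ℝ (Fin d) | (‖k‖₊ : ℝ≥0∞) < Θ x},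
    ENNReal.ofReal ((f (x + k) - f x) ^ 2 / ‖k‖ ^ (d + 1))

/-!
Enlarging the screening radius from `σ` to `σ + h / 3` multiplies the energy by at most a constant,
and finitely many enlargements absorb `M`. To bound the contribution of a jump `k` in the shell
`σ x ≤ ‖k‖ < σ x + h / 3`, average `f (x + k) - f x` over intermediate points `x + w`, where `w`
ranges over a ball of radius `h / 3` inside `{‖w‖ < σ x} ∩ {‖w - k‖ < h}`. The jump from `x` to
`x + w` is paid for by the energy at `x`, since `‖w‖ < ‖k‖` and the kernel is radially decreasing.
The jump from `x + w` to `x + k` has length less than `h`; translating by `k`, it is paid for by the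
energy near the diagonal, the kernel being integrable away from the origin.
-/

namespace Screened

open Metric

lemma enorm_sub_rpow_le {F : Type*} [SeminormedAddCommGroup F] {p : ℝ} (hp : 1 ≤ p) (a b c : F) :
    ‖c - a‖ₑ ^ p ≤ 2 ^ (p - 1) * (‖b - a‖ₑ ^ p + ‖b - c‖ₑ ^ p) := by
  calc ‖c - a‖ₑ ^ p = ‖(b - a) - (b - c)‖ₑ ^ p := by rw [sub_sub_sub_cancel_left]
    _ ≤ (‖b - a‖ₑ + ‖b - c‖ₑ) ^ p := by
        gcongr
        exact enorm_sub_le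
    _ ≤ 2 ^ (p - 1) * (‖b - a‖ₑ ^ p + ‖b - c‖ₑ ^ p) :=
        ENNReal.rpow_add_le_mul_rpow_add_rpow _ _ hp

lemma exists_ball_subset_ball_inter_ball {E : Type*} [SeminormedAddCommGroup E]
    [NormedSpace ℝ E] {k : E} {s h : ℝ} (hh : 0 < h) (hk : h ≤ ‖k‖) (hks : ‖k‖ < s + h / 3) :
    ∃ c, ball c (h / 3) ⊆ ball 0 s ∩ ball k h := by
  have hk₀ : 0 < ‖k‖ := hh.trans_le hk
  have ht : 2 * h / 3 / ‖k‖ ≤ 1 := by rw [div_le_one hk₀]; linarith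
  obtain ⟨c, hc₀, hck⟩ := exists_dist_eq 0 k (a := 2 * h / 3 / ‖k‖) (b := 1 - 2 * h / 3 / ‖k‖)
    (by positivity) (by linarith) (by ring)
  rw [dist_zero_left, dist_zero_left, sub_mul, one_mul, div_mul_cancel₀ _ hk₀.ne'] at hc₀
  rw [dist_zero_left, div_mul_cancel₀ _ hk₀.ne'] at hck
  refine ⟨c, Set.subset_inter (ball_subset_ball' ?_) (ball_subset_ball' ?_)⟩
  · rw [dist_zero_right]; linarith
  · linarith

lemma lintegral_lintegral_ball {E : Type*} [NormedAddCommGroup E] [SecondCountableTopology E]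
    [MeasurableSpace E] [BorelSpace E] (μ ν : Measure E) [μ.IsAddHaarMeasure] [SFinite μ]
    [SFinite ν] (h : ℝ) {G : E → ℝ≥0∞} (hG : Measurable G) :
    ∫⁻ k, ∫⁻ w in ball k h, G w ∂ν ∂μ = μ (ball 0 h) * ∫⁻ w, G w ∂ν := by
  have hmeas : Measurable fun q : E × E ↦ {q : E × E | dist q.2 q.1 < h}.indicator (G ·.2) q :=
    (hG.comp measurable_snd).indicator (measurableSet_lt (by fun_prop) (by fun_prop))
  have hball : ∀ w, ∫⁻ k, (ball k h).indicator G w ∂μ = μ (ball 0 h) * G w := fun w ↦ by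
    calc ∫⁻ k, (ball k h).indicator G w ∂μ = ∫⁻ k, (ball w h).indicator (fun _ ↦ G w) k ∂μ := by
          refine lintegral_congr fun k ↦ ?_
          simp only [Set.indicator, mem_ball, dist_comm]
      _ = μ (ball 0 h) * G w := by
          rw [lintegral_indicator measurableSet_ball, setLIntegral_const,
            Measure.addHaar_ball_center, mul_comm]
  calc ∫⁻ k, ∫⁻ w in ball k h, G w ∂ν ∂μ = ∫⁻ k, ∫⁻ w, (ball k h).indicator G w ∂ν ∂μ :=
        lintegral_congr fun k ↦ (lintegral_indicator measurableSet_ball G).symm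
    _ = ∫⁻ w, ∫⁻ k, (ball k h).indicator G w ∂μ ∂ν := lintegral_lintegral_swap hmeas.aemeasurable
    _ = μ (ball 0 h) * ∫⁻ w, G w ∂ν := by
        simp only [hball]
        exact lintegral_const_mul _ hG

lemma lintegral_lintegral_mul_comp_add {E : Type*} [AddGroup E] [MeasurableSpace E]
    [MeasurableAdd₂ E] (μ ν : Measure E) [μ.IsAddRightInvariant] [SFinite μ] [SFinite ν]
    {a G : E → ℝ≥0∞} (ha : Measurable a) (hG : Measurable G) :
    ∫⁻ x, ∫⁻ k, a k * G (x + k) ∂ν ∂μ = (∫⁻ k, a k ∂ν) * ∫⁻ x, G x ∂μ := by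
  rw [lintegral_lintegral_swap (by fun_prop), ← lintegral_mul_const _ ha]
  refine lintegral_congr fun k ↦ ?_
  rw [lintegral_const_mul _ (by fun_prop), lintegral_add_right_eq_self G]

lemma measurable_enorm_sub_rpow {α E F : Type*} [MeasurableSpace α] [MeasurableSpace E]
    [SeminormedAddCommGroup F] {f : E → F} (hf : StronglyMeasurable f) {a b : α → E}
    (ha : Measurable a) (hb : Measurable b) (p : ℝ) :
    Measurable fun t ↦ ‖f (a t) - f (b t)‖ₑ ^ p :=
  ((hf.comp_measurable ha).sub (hf.comp_measurable hb)).enorm.pow_const p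

variable {E F : Type*} [NormedAddCommGroup E] [MeasurableSpace E] [SeminormedAddCommGroup F]

/-- The inner integral of the screened energy: the energy of the jumps of `f` from `x` that are
shorter than `s`, for the radial kernel `k ↦ φ ‖k‖` and the exponent `p`. -/
def energyAt (μ : Measure E) (φ : ℝ≥0∞ → ℝ≥0∞) (p : ℝ) (s : ℝ≥0∞) (f : E → F) (x : E) : ℝ≥0∞ :=
  ∫⁻ k in eball 0 s, φ ‖k‖ₑ * ‖f (x + k) - f x‖ₑ ^ p ∂μ

/-- The screened energy of `f`, the `p`-th power of a screened Sobolev seminorm. The choice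
`p = 2`, `φ r = r ^ (-(d + 1))` gives `screenedSq d`. -/
def energy (μ : Measure E) (φ : ℝ≥0∞ → ℝ≥0∞) (p : ℝ) (σ : E → ℝ≥0∞) (f : E → F) : ℝ≥0∞ :=
  ∫⁻ x, energyAt μ φ p (σ x) f x ∂μ

/-- The unweighted `p`-oscillation of `f` about `y` at scale `h`. -/
def oscillation (μ : Measure E) (p h : ℝ) (f : E → F) (y : E) : ℝ≥0∞ :=
  ∫⁻ u in ball 0 h, ‖f (y + u) - f y‖ₑ ^ p ∂μ

/-- The integral of the radial kernel `k ↦ φ ‖k‖` over the complement of the ball of radius `h`. -/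
def kernelTail (μ : Measure E) (φ : ℝ≥0∞ → ℝ≥0∞) (h : ℝ) : ℝ≥0∞ :=
  ∫⁻ k in (ball 0 h)ᶜ, φ ‖k‖ₑ ∂μ

/-- The radial kernels `k ↦ φ ‖k‖` for which screening radii above the scale `h` can be compared:
radially decreasing, integrable away from the origin and nondegenerate at distance `h`. -/
structure IsScreeningKernel (μ : Measure E) (φ : ℝ≥0∞ → ℝ≥0∞) (h : ℝ) : Prop where
  antitone : Antitone φ
  ne_zero : φ (.ofReal h) ≠ 0
  ne_top : φ (.ofReal h) ≠ ⊤
  tail_ne_top : kernelTail μ φ h ≠ ⊤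

/-- The factor by which the energy grows when the screening radius increases by `h / 3`. -/
def enlargementConst (μ : Measure E) (φ : ℝ≥0∞ → ℝ≥0∞) (p h : ℝ) : ℝ≥0∞ :=
  1 + (μ (ball 0 (h / 3)))⁻¹ *
    (2 ^ (p - 1) * (μ (ball 0 h) + kernelTail μ φ h * (φ (.ofReal h))⁻¹))

variable {μ : Measure E} {φ : ℝ≥0∞ → ℝ≥0∞} {p h : ℝ} {f : E → F}

lemma energyAt_mono {s t : ℝ≥0∞} (hst : s ≤ t) (f : E → F) (x : E) :
    energyAt μ φ p s f x ≤ energyAt μ φ p t f x :=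
  lintegral_mono_set (eball_subset_eball hst)

lemma energy_mono {σ τ : E → ℝ≥0∞} (hστ : ∀ x, σ x ≤ τ x) (f : E → F) :
    energy μ φ p σ f ≤ energy μ φ p τ f :=
  lintegral_mono fun x ↦ energyAt_mono (hστ x) f x

lemma enlargementConst_ne_top [NormedSpace ℝ E] [FiniteDimensional ℝ E] [μ.IsAddHaarMeasure]
    (hφ : IsScreeningKernel μ φ h) (hh : 0 < h) (p : ℝ) : enlargementConst μ φ p h ≠ ⊤ := by
  have hv : μ (ball 0 (h / 3)) ≠ 0 := (measure_ball_pos μ _ (by positivity)).ne'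
  have hB : μ (ball 0 h) ≠ ⊤ := measure_ball_lt_top.ne
  have hφ₀ := hφ.ne_zero
  have htail := hφ.tail_ne_top
  unfold enlargementConst
  finiteness

variable [BorelSpace E]

lemma mul_oscillation_le_energyAt (hφ : Antitone φ) (hφh : φ (.ofReal h) ≠ ⊤)
    {s : ℝ≥0∞} (hs : .ofReal h ≤ s) (f : E → F) (y : E) :
    φ (.ofReal h) * oscillation μ p h f y ≤ energyAt μ φ p s f y := by
  calc φ (.ofReal h) * oscillation μ p h f y
      = ∫⁻ u in ball 0 h, φ (.ofReal h) * ‖f (y + u) - f y‖ₑ ^ p ∂μ :=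
        (lintegral_const_mul' _ _ hφh).symm
    _ ≤ ∫⁻ u in ball 0 h, φ ‖u‖ₑ * ‖f (y + u) - f y‖ₑ ^ p ∂μ := by
        refine setLIntegral_mono' measurableSet_ball fun u hu ↦ ?_
        have : ‖u‖ₑ ≤ .ofReal h := by
          rw [← ofReal_norm]
          exact ENNReal.ofReal_le_ofReal (mem_ball_zero_iff.1 hu).le
        gcongr
        exact hφ this
    _ = energyAt μ φ p (.ofReal h) f y := by rw [energyAt, eball_ofReal]
    _ ≤ energyAt μ φ p s f y := energyAt_mono hs f y

lemma mul_lintegral_oscillation_le_energy (hφ : Antitone φ)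
    (hφh : φ (.ofReal h) ≠ ⊤) {σ : E → ℝ≥0∞} (hσ : ∀ x, .ofReal h ≤ σ x) (f : E → F) :
    φ (.ofReal h) * ∫⁻ y, oscillation μ p h f y ∂μ ≤ energy μ φ p σ f := by
  rw [← lintegral_const_mul' _ _ hφh]
  exact lintegral_mono fun y ↦ mul_oscillation_le_energyAt hφ hφh (hσ y) f y

variable [μ.IsAddHaarMeasure]

lemma lintegral_ball_enorm_sub_rpow (hf : StronglyMeasurable f) (x k : E) :
    ∫⁻ w in ball k h, ‖f (x + w) - f (x + k)‖ₑ ^ p ∂μ = oscillation μ p h f (x + k) := by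
  have htranslate : (k + ·) ⁻¹' ball k h = ball 0 h := by ext; simp
  rw [← (measurePreserving_add_left μ k).setLIntegral_comp_preimage measurableSet_ball
    (measurable_enorm_sub_rpow hf (measurable_const_add x) measurable_const p), htranslate]
  simp only [oscillation, add_assoc]

variable [NormedSpace ℝ E]

lemma measure_ball_le_measure_eball_inter_ball {k : E} {s : ℝ≥0∞} (hh : 0 < h)
    (hs : .ofReal h ≤ s) (hk : k ∈ eball 0 (s + .ofReal (h / 3)) \ eball 0 s) :
    μ (ball 0 (h / 3)) ≤ μ (eball 0 s ∩ ball k h) := by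
  obtain ⟨hk_lt, hk_ge⟩ : ‖k‖ₑ < s + .ofReal (h / 3) ∧ s ≤ ‖k‖ₑ := by simpa using hk
  lift s to NNReal using ne_top_of_le_ne_top enorm_ne_top hk_ge
  have hhk : h ≤ ‖k‖ := by
    rw [← ENNReal.ofReal_le_ofReal_iff (norm_nonneg k), ofReal_norm]
    exact hs.trans hk_ge
  have hks : ‖k‖ < s + h / 3 := by
    rw [← ENNReal.ofReal_lt_ofReal_iff (by positivity), ofReal_norm,
      ENNReal.ofReal_add NNReal.zero_le_coe (by positivity), ENNReal.ofReal_coe_nnreal]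
    exact hk_lt
  obtain ⟨c, hc⟩ := exists_ball_subset_ball_inter_ball hh hhk hks
  rw [eball_coe, ← Measure.addHaar_ball_center μ c]
  exact measure_mono hc

lemma measure_ball_mul_enorm_sub_rpow_le (hp : 1 ≤ p) (hh : 0 < h) {s : ℝ≥0∞}
    (hs : .ofReal h ≤ s) (hf : StronglyMeasurable f) (x : E) {k : E}
    (hk : k ∈ eball 0 (s + .ofReal (h / 3)) \ eball 0 s) :
    μ (ball 0 (h / 3)) * ‖f (x + k) - f x‖ₑ ^ p ≤ 2 ^ (p - 1) *
      (∫⁻ w in eball 0 s ∩ ball k h, ‖f (x + w) - f x‖ₑ ^ p ∂μ +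
        oscillation μ p h f (x + k)) := by
  set V := eball 0 s ∩ ball k h
  calc μ (ball 0 (h / 3)) * ‖f (x + k) - f x‖ₑ ^ p ≤ ∫⁻ _ in V, ‖f (x + k) - f x‖ₑ ^ p ∂μ := by
        rw [setLIntegral_const, mul_comm]
        exact mul_le_mul_right (measure_ball_le_measure_eball_inter_ball hh hs hk) _
    _ ≤ ∫⁻ w in V, 2 ^ (p - 1) *
          (‖f (x + w) - f x‖ₑ ^ p + ‖f (x + w) - f (x + k)‖ₑ ^ p) ∂μ :=
        lintegral_mono fun w ↦ enorm_sub_rpow_le hp _ _ _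
    _ = 2 ^ (p - 1) * (∫⁻ w in V, ‖f (x + w) - f x‖ₑ ^ p ∂μ +
          ∫⁻ w in V, ‖f (x + w) - f (x + k)‖ₑ ^ p ∂μ) := by
        rw [lintegral_const_mul' _ _ (by finiteness), lintegral_add_left
          (measurable_enorm_sub_rpow hf (measurable_const_add x) measurable_const p)]
    _ ≤ 2 ^ (p - 1) * (∫⁻ w in V, ‖f (x + w) - f x‖ₑ ^ p ∂μ + oscillation μ p h f (x + k)) := by
        rw [← lintegral_ball_enorm_sub_rpow hf]
        gcongr
        exact Set.inter_subset_right

variable [FiniteDimensional ℝ E]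

lemma measurable_oscillation (hf : StronglyMeasurable f) : Measurable (oscillation μ p h f) :=
  (measurable_enorm_sub_rpow hf (measurable_fst.add measurable_snd)
    measurable_fst p).lintegral_prod_right'

lemma lintegral_kernel_mul_lintegral_le (hφ : Antitone φ) (s : ℝ≥0∞) (h : ℝ) {S : Set E}
    (hS : S ⊆ (eball 0 s)ᶜ) {G : E → ℝ≥0∞} (hG : Measurable G) :
    ∫⁻ k in S, φ ‖k‖ₑ * ∫⁻ w in eball 0 s ∩ ball k h, G w ∂μ ∂μ ≤
      μ (ball 0 h) * ∫⁻ w in eball 0 s, φ ‖w‖ₑ * G w ∂μ := by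
  have hφm : Measurable fun w : E ↦ φ ‖w‖ₑ := hφ.measurable.comp measurable_enorm
  calc ∫⁻ k in S, φ ‖k‖ₑ * ∫⁻ w in eball 0 s ∩ ball k h, G w ∂μ ∂μ
      ≤ ∫⁻ k in (eball 0 s)ᶜ, φ ‖k‖ₑ * ∫⁻ w in eball 0 s ∩ ball k h, G w ∂μ ∂μ :=
        lintegral_mono_set hS
    _ ≤ ∫⁻ k in (eball 0 s)ᶜ, ∫⁻ w in eball 0 s ∩ ball k h, φ ‖w‖ₑ * G w ∂μ ∂μ := by
        refine setLIntegral_mono' measurableSet_eball.compl fun k hk ↦ ?_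
        rw [← lintegral_const_mul _ hG]
        refine setLIntegral_mono' (measurableSet_eball.inter measurableSet_ball) fun w hw ↦ ?_
        have hwk : ‖w‖ₑ ≤ ‖k‖ₑ :=
          (mem_eball_zero_iff.1 hw.1).le.trans (not_lt.1 fun hlt ↦ hk (mem_eball_zero_iff.2 hlt))
        gcongr
        exact hφ hwk
    _ ≤ ∫⁻ k, ∫⁻ w in eball 0 s ∩ ball k h, φ ‖w‖ₑ * G w ∂μ ∂μ := setLIntegral_le_lintegral _ _
    _ = ∫⁻ k, ∫⁻ w in ball k h, φ ‖w‖ₑ * G w ∂μ.restrict (eball 0 s) ∂μ := by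
        simp only [Measure.restrict_restrict measurableSet_ball, Set.inter_comm]
    _ = μ (ball 0 h) * ∫⁻ w in eball 0 s, φ ‖w‖ₑ * G w ∂μ :=
        lintegral_lintegral_ball μ _ h (hφm.mul hG)

lemma mul_lintegral_shell_le (hp : 1 ≤ p) (hφ : Antitone φ) (hh : 0 < h) {s : ℝ≥0∞}
    (hs : .ofReal h ≤ s) (hf : StronglyMeasurable f) (x : E) :
    μ (ball 0 (h / 3)) * ∫⁻ k in eball 0 (s + .ofReal (h / 3)) \ eball 0 s,
        φ ‖k‖ₑ * ‖f (x + k) - f x‖ₑ ^ p ∂μ ≤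
      2 ^ (p - 1) * (μ (ball 0 h) * energyAt μ φ p s f x +
        ∫⁻ k in (ball 0 h)ᶜ, φ ‖k‖ₑ * oscillation μ p h f (x + k) ∂μ) := by
  set S := eball (0 : E) (s + .ofReal (h / 3)) \ eball 0 s
  have hSm : MeasurableSet S := measurableSet_eball.diff measurableSet_eball
  have hφm : Measurable fun w : E ↦ φ ‖w‖ₑ := hφ.measurable.comp measurable_enorm
  have hosc : Measurable fun k ↦ φ ‖k‖ₑ * oscillation μ p h f (x + k) :=
    hφm.mul ((measurable_oscillation hf).comp (measurable_const_add x))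
  have hSfar : S ⊆ (ball 0 h)ᶜ := fun k hk hkh ↦
    hk.2 (eball_subset_eball hs (by rwa [eball_ofReal]))
  calc μ (ball 0 (h / 3)) * ∫⁻ k in S, φ ‖k‖ₑ * ‖f (x + k) - f x‖ₑ ^ p ∂μ
      = ∫⁻ k in S, φ ‖k‖ₑ * (μ (ball 0 (h / 3)) * ‖f (x + k) - f x‖ₑ ^ p) ∂μ := by
        rw [← lintegral_const_mul' _ _ measure_ball_lt_top.ne]
        simp only [mul_left_comm]
    _ ≤ ∫⁻ k in S, 2 ^ (p - 1) *
          (φ ‖k‖ₑ * ∫⁻ w in eball 0 s ∩ ball k h, ‖f (x + w) - f x‖ₑ ^ p ∂μ +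
            φ ‖k‖ₑ * oscillation μ p h f (x + k)) ∂μ := by
        refine setLIntegral_mono' hSm fun k hk ↦ ?_
        rw [← mul_add, mul_left_comm (2 ^ (p - 1))]
        exact mul_le_mul_right (measure_ball_mul_enorm_sub_rpow_le hp hh hs hf x hk) _
    _ = 2 ^ (p - 1) *
          (∫⁻ k in S, φ ‖k‖ₑ * ∫⁻ w in eball 0 s ∩ ball k h, ‖f (x + w) - f x‖ₑ ^ p ∂μ ∂μ +
            ∫⁻ k in S, φ ‖k‖ₑ * oscillation μ p h f (x + k) ∂μ) := by
        rw [lintegral_const_mul' _ _ (by finiteness), lintegral_add_right _ hosc]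
    _ ≤ 2 ^ (p - 1) * (μ (ball 0 h) * energyAt μ φ p s f x +
          ∫⁻ k in (ball 0 h)ᶜ, φ ‖k‖ₑ * oscillation μ p h f (x + k) ∂μ) := by
        gcongr
        exact lintegral_kernel_mul_lintegral_le hφ s h (fun k hk ↦ hk.2)
          (measurable_enorm_sub_rpow hf (measurable_const_add x) measurable_const p)

lemma energyAt_add_le (hp : 1 ≤ p) (hφ : Antitone φ) (hh : 0 < h) {s : ℝ≥0∞}
    (hs : .ofReal h ≤ s) (hf : StronglyMeasurable f) (x : E) :
    energyAt μ φ p (s + .ofReal (h / 3)) f x ≤ energyAt μ φ p s f x +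
      (μ (ball 0 (h / 3)))⁻¹ * (2 ^ (p - 1) * (μ (ball 0 h) * energyAt μ φ p s f x +
        ∫⁻ k in (ball 0 h)ᶜ, φ ‖k‖ₑ * oscillation μ p h f (x + k) ∂μ)) := by
  have hsplit : eball (0 : E) (s + .ofReal (h / 3)) =
      eball 0 s ∪ eball 0 (s + .ofReal (h / 3)) \ eball 0 s :=
    (Set.union_sdiff_cancel (eball_subset_eball le_self_add)).symm
  rw [energyAt, hsplit]
  refine (lintegral_union_le _ _ _).trans (add_le_add le_rfl ?_)
  rw [← ENNReal.div_eq_inv_mul, ENNReal.le_div_iff_mul_le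
    (.inl (measure_ball_pos μ _ (by positivity)).ne') (.inl measure_ball_lt_top.ne), mul_comm]
  exact mul_lintegral_shell_le hp hφ hh hs hf x

lemma lintegral_kernel_mul_oscillation_le (hφ : IsScreeningKernel μ φ h) {σ : E → ℝ≥0∞}
    (hσ : ∀ x, .ofReal h ≤ σ x) (hf : StronglyMeasurable f) :
    ∫⁻ x, ∫⁻ k in (ball 0 h)ᶜ, φ ‖k‖ₑ * oscillation μ p h f (x + k) ∂μ ∂μ ≤
      kernelTail μ φ h * (φ (.ofReal h))⁻¹ * energy μ φ p σ f := by
  have hφm : Measurable fun k : E ↦ φ ‖k‖ₑ := hφ.antitone.measurable.comp measurable_enorm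
  rw [lintegral_lintegral_mul_comp_add μ _ hφm (measurable_oscillation hf), ← kernelTail,
    mul_assoc, ← ENNReal.div_eq_inv_mul]
  refine mul_le_mul_right ?_ _
  rw [ENNReal.le_div_iff_mul_le (.inl hφ.ne_zero) (.inl hφ.ne_top), mul_comm]
  exact mul_lintegral_oscillation_le_energy hφ.antitone hφ.ne_top hσ f

lemma energy_add_le (hp : 1 ≤ p) (hφ : IsScreeningKernel μ φ h) (hh : 0 < h)
    {σ : E → ℝ≥0∞} (hσ : ∀ x, .ofReal h ≤ σ x) (hf : StronglyMeasurable f) :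
    energy μ φ p (fun x ↦ σ x + .ofReal (h / 3)) f ≤
      enlargementConst μ φ p h * energy μ φ p σ f := by
  set v := μ (ball (0 : E) (h / 3))
  set c : ℝ≥0∞ := 2 ^ (p - 1)
  set R : E → ℝ≥0∞ := fun x ↦ ∫⁻ k in (ball 0 h)ᶜ, φ ‖k‖ₑ * oscillation μ p h f (x + k) ∂μ
  have hv : v⁻¹ ≠ ⊤ := ENNReal.inv_ne_top.2 (measure_ball_pos μ _ (by positivity)).ne'
  have hc : c ≠ ⊤ := by finiteness
  have hB : μ (ball 0 h) ≠ ⊤ := measure_ball_lt_top.ne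
  have hR : Measurable R :=
    (((hφ.antitone.measurable.comp measurable_enorm).comp measurable_snd).mul
      ((measurable_oscillation hf).comp
        (measurable_fst.add measurable_snd))).lintegral_prod_right'
  calc energy μ φ p (fun x ↦ σ x + .ofReal (h / 3)) f
      ≤ ∫⁻ x, (energyAt μ φ p (σ x) f x +
          v⁻¹ * (c * (μ (ball 0 h) * energyAt μ φ p (σ x) f x + R x))) ∂μ :=
        lintegral_mono fun x ↦ energyAt_add_le hp hφ.antitone hh (hσ x) hf x
    _ = ∫⁻ x, ((1 + v⁻¹ * (c * μ (ball 0 h))) * energyAt μ φ p (σ x) f x +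
          v⁻¹ * c * R x) ∂μ := lintegral_congr fun x ↦ by ring
    _ = (1 + v⁻¹ * (c * μ (ball 0 h))) * energy μ φ p σ f + v⁻¹ * c * ∫⁻ x, R x ∂μ := by
        rw [lintegral_add_right _ (hR.const_mul _), lintegral_const_mul' _ _ (by finiteness),
          lintegral_const_mul' _ _ (by finiteness), energy]
    _ ≤ (1 + v⁻¹ * (c * μ (ball 0 h))) * energy μ φ p σ f +
          v⁻¹ * c * (kernelTail μ φ h * (φ (.ofReal h))⁻¹ * energy μ φ p σ f) := by
        gcongr
        exact lintegral_kernel_mul_oscillation_le hφ hσ hf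
    _ = enlargementConst μ φ p h * energy μ φ p σ f := by rw [enlargementConst]; ring

lemma energy_add_nsmul_le (hp : 1 ≤ p) (hφ : IsScreeningKernel μ φ h) (hh : 0 < h)
    {σ : E → ℝ≥0∞} (hσ : ∀ x, .ofReal h ≤ σ x) (hf : StronglyMeasurable f) (n : ℕ) :
    energy μ φ p (fun x ↦ σ x + n • .ofReal (h / 3)) f ≤
      enlargementConst μ φ p h ^ n * energy μ φ p σ f := by
  induction n with
  | zero => simp
  | succ n ih =>
    calc energy μ φ p (fun x ↦ σ x + (n + 1) • .ofReal (h / 3)) f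
        = energy μ φ p (fun x ↦ σ x + n • .ofReal (h / 3) + .ofReal (h / 3)) f := by
          simp only [succ_nsmul, add_assoc]
      _ ≤ enlargementConst μ φ p h * energy μ φ p (fun x ↦ σ x + n • .ofReal (h / 3)) f :=
          energy_add_le hp hφ hh (fun x ↦ (hσ x).trans le_self_add) hf
      _ ≤ enlargementConst μ φ p h * (enlargementConst μ φ p h ^ n * energy μ φ p σ f) := by
          gcongr
      _ = enlargementConst μ φ p h ^ (n + 1) * energy μ φ p σ f := by ring

lemma kernelTail_rpow_neg_ne_top {r : ℝ} (hr : Module.finrank ℝ E < r) (hh : 0 < h) :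
    kernelTail μ (· ^ (-r)) h ≠ ⊤ := by
  have hr₀ : 0 ≤ r := (Nat.cast_nonneg _).trans hr.le
  have hbound : ∀ k ∈ (ball (0 : E) h)ᶜ,
      ‖k‖ₑ ^ (-r) ≤ .ofReal (((1 + h) / h) ^ r) * .ofReal ((1 + ‖k‖) ^ (-r)) := fun k hk ↦ by
    have hhk : h ≤ ‖k‖ := by simpa using hk
    have hk₀ : 0 < ‖k‖ := hh.trans_le hhk
    have hle : (1 + ‖k‖) / ‖k‖ ≤ (1 + h) / h := by
      rw [div_le_div_iff₀ hk₀ hh]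
      linarith
    rw [← ofReal_norm, ENNReal.ofReal_rpow_of_pos hk₀, ← ENNReal.ofReal_mul (by positivity)]
    refine ENNReal.ofReal_le_ofReal ?_
    calc ‖k‖ ^ (-r) = ((1 + ‖k‖) / ‖k‖) ^ r * (1 + ‖k‖) ^ (-r) := by
          rw [Real.div_rpow (by positivity) hk₀.le, Real.rpow_neg hk₀.le,
            Real.rpow_neg (by positivity)]
          field_simp
      _ ≤ ((1 + h) / h) ^ r * (1 + ‖k‖) ^ (-r) := by gcongr
  refine ne_top_of_le_ne_top ?_ ((setLIntegral_mono' measurableSet_ball.compl hbound).trans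
    (setLIntegral_le_lintegral _ _))
  rw [lintegral_const_mul' _ _ ENNReal.ofReal_ne_top]
  exact ENNReal.mul_ne_top ENNReal.ofReal_ne_top (finite_integral_one_add_norm hr).ne

lemma isScreeningKernel_rpow_neg {r : ℝ} (hr : Module.finrank ℝ E < r) (hh : 0 < h) :
    IsScreeningKernel μ (· ^ (-r)) h where
  antitone s t hst := by
    have hr₀ : 0 ≤ r := (Nat.cast_nonneg _).trans hr.le
    simp only [ENNReal.rpow_neg]
    gcongr
  ne_zero := by simp [ENNReal.rpow_eq_zero_iff, hh]
  ne_top := by simp [ENNReal.rpow_eq_top_iff, hh]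
  tail_ne_top := kernelTail_rpow_neg_ne_top hr hh

lemma screenedSq_eq_energy (d : ℕ) (Θ : EuclideanSpace ℝ (Fin d) → ℝ≥0∞)
    (f : EuclideanSpace ℝ (Fin d) → ℝ) :
    screenedSq d Θ f = energy volume (· ^ (-(d + 1) : ℝ)) 2 Θ f := by
  have hset : ∀ x, {k : EuclideanSpace ℝ (Fin d) | (‖k‖₊ : ℝ≥0∞) < Θ x} = eball 0 (Θ x) :=
    fun x ↦ by ext k; rw [mem_eball_zero_iff]; rfl
  simp only [screenedSq, energy, energyAt, hset]
  refine lintegral_congr fun x ↦ lintegral_congr fun k ↦ ?_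
  rcases eq_or_ne k 0 with rfl | hk
  · simp
  · have hk₀ : 0 < ‖k‖ := norm_pos_iff.2 hk
    rw [div_eq_inv_mul, ENNReal.ofReal_mul (by positivity), ENNReal.rpow_two,
      ← sq_abs, ENNReal.ofReal_pow (abs_nonneg _), ← Real.enorm_eq_ofReal_abs, ← ofReal_norm k,
      ENNReal.ofReal_rpow_of_pos hk₀, Real.rpow_neg hk₀.le, ← Nat.cast_add_one, Real.rpow_natCast]

end Screened

open Screened

theorem stmt_1_general {E F : Type*} [NormedAddCommGroup E] [NormedSpace ℝ E]
    [FiniteDimensional ℝ E] [MeasurableSpace E] [BorelSpace E] [SeminormedAddCommGroup F]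
    {μ : Measure E} [μ.IsAddHaarMeasure] {φ : ℝ≥0∞ → ℝ≥0∞} {p h : ℝ} (hp : 1 ≤ p)
    (hφ : IsScreeningKernel μ φ h) (hh : 0 < h) (M : ℝ) :
    ∃ C : ℝ, 0 < C ∧ ∀ σ₁ σ₂ : E → ℝ≥0∞, (∀ x, .ofReal h ≤ σ₂ x) →
      (∀ x, σ₁ x ≤ σ₂ x + .ofReal M) → ∀ f : E → F, StronglyMeasurable f →
      energy μ φ p σ₁ f ≤ .ofReal (C ^ p) * energy μ φ p σ₂ f := by
  obtain ⟨n, hn⟩ := exists_nat_ge (M / (h / 3))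
  have hM : ENNReal.ofReal M ≤ n • .ofReal (h / 3) := by
    rw [← ENNReal.ofReal_nsmul, nsmul_eq_mul]
    exact ENNReal.ofReal_le_ofReal ((div_le_iff₀ (by positivity)).1 hn)
  set K := enlargementConst μ φ p h ^ n
  have hK : K ≠ ⊤ := ENNReal.pow_ne_top (enlargementConst_ne_top hφ hh p)
  have hKC : K ≤ .ofReal ((K.toReal + 1) ^ p) := by
    rw [ENNReal.le_ofReal_iff_toReal_le hK (by positivity)]
    exact (le_add_of_nonneg_right zero_le_one).trans
      (Real.self_le_rpow_of_one_le (le_add_of_nonneg_left ENNReal.toReal_nonneg) hp)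
  refine ⟨K.toReal + 1, by positivity, fun σ₁ σ₂ hσ₂ hσ f hf ↦ ?_⟩
  calc energy μ φ p σ₁ f ≤ energy μ φ p (fun x ↦ σ₂ x + n • .ofReal (h / 3)) f :=
        energy_mono (fun x ↦ (hσ x).trans (by gcongr)) f
    _ ≤ K * energy μ φ p σ₂ f := energy_add_nsmul_le hp hφ hh hσ₂ hf n
    _ ≤ .ofReal ((K.toReal + 1) ^ p) * energy μ φ p σ₂ f := by gcongr

/-- comparison of screened Sobolev spaces.  If `σ₁, σ₂ : ℝ^d → (0,∞]`
are lower semicontinuous, bounded below by `h > 0`, and satisfy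
`‖σ₁ - σ₂‖_{L^∞} ≤ M < ∞`, then there is `C = C(d,h,M)` with
`‖f‖_{H̃^{1/2}_{σ₁}} ≤ C ‖f‖_{H̃^{1/2}_{σ₂}}` for all `f ∈ H̃^{1/2}_{σ₂}(ℝ^d)`;
in particular the two screened spaces coincide. -/
theorem stmt_1 (d : ℕ) (h M : ℝ) (hh : 0 < h) (hM : 0 ≤ M) :
    ∃ C : ℝ, 0 < C ∧
      ∀ (σ₁ σ₂ : EuclideanSpace ℝ (Fin d) → ℝ≥0∞),
        LowerSemicontinuous σ₁ → LowerSemicontinuous σ₂ →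
        (∀ x, ENNReal.ofReal h < σ₁ x) → (∀ x, ENNReal.ofReal h < σ₂ x) →
        (∀ x, σ₁ x ≤ σ₂ x + ENNReal.ofReal M ∧ σ₂ x ≤ σ₁ x + ENNReal.ofReal M) →
        ∀ (f : EuclideanSpace ℝ (Fin d) → ℝ), Measurable f →
          screenedSq d σ₂ f < ⊤ →
          screenedSq d σ₁ f ≤ ENNReal.ofReal (C ^ 2) * screenedSq d σ₂ f ∧
          screenedSq d σ₁ f < ⊤ := by
  obtain ⟨C, hC, hle⟩ := stmt_1_general (E := EuclideanSpace ℝ (Fin d)) (F := ℝ) (μ := volume)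
    one_le_two (isScreeningKernel_rpow_neg (r := d + 1) (by simp) hh) hh M
  simp only [← screenedSq_eq_energy, Real.rpow_two] at hle
  refine ⟨C, hC, fun σ₁ σ₂ _ _ _ hσ₂ hσ f hf hfin ↦ ?_⟩
  have key := hle σ₁ σ₂ (fun x ↦ (hσ₂ x).le) (fun x ↦ (hσ x).1) f hf.stronglyMeasurable
  exact ⟨key, key.trans_lt (ENNReal.mul_lt_top ENNReal.ofReal_lt_top hfin)⟩

end
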